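/- Let K be a commutative semiring, let (P_X)_{X∈𝒳} be a proper algebraic system over (Δ ∪ 𝒳) with unique quasiregular solution (S_X)_{X∈𝒳}. Then for every X ∈ 𝒳 and every word w ∈ Δ*, (S_X, w) = ∑_{t ∈ Der(G_X, w)} wt(t), the sum of the weights of all derivation trees of w under the underlying grammar G_X. -/

import Mathlib

/-! ### Algebraic formal power series -/

section Algebraic

variable {K Δ : Type} [CommSemiring K]

open Classical in
/-- Given a family of series `(S_X)` and a word `u ∈ (Δ ∪ 𝒳)*`, the series
`u₁ S_{X₁} u₂ ⋯ u_k S_{X_k} u_{k+1}` obtained by substituting `S_X` for each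
variable `X` in `u` and taking Cauchy products. -/
noncomputable def wordSeries {X : Type} (S : X → List Δ → K) :
    List (Δ ⊕ X) → List Δ → K
  | [] => fun w => if w = [] then 1 else 0
  | (Sum.inl a) :: rest => fun w =>
      match w with
      | [] => 0
      | b :: w' => if b = a then wordSeries S rest w' else 0
  | (Sum.inr x) :: rest => fun w =>
      ∑ k ∈ Finset.range (w.length + 1),
        S x (w.take k) * wordSeries S rest (w.drop k)

/-- `(S_X)` is a solution of the algebraic system `(P_X)`. -/
def IsSolution {X : Type} (P : X → List (Δ ⊕ X) → K) (S : X → List Δ → K) : Prop :=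
  ∀ x w, S x w = ∑ᶠ u : List (Δ ⊕ X), P x u * wordSeries S u w

/-- A proper algebraic system: `(P_X, Y) = (P_X, ε) = 0` for all variables `X, Y`. -/
def IsProper {X : Type} (P : X → List (Δ ⊕ X) → K) : Prop :=
  ∀ x, P x [] = 0 ∧ ∀ y : X, P x [Sum.inr y] = 0

/-- `S : Δ* → K` is an algebraic formal power series: a component of the
(unique) quasiregular solution of a proper algebraic system with finitely
supported polynomials. -/
def IsAlgebraicSeries (K Δ : Type) [CommSemiring K] (S : List Δ → K) : Prop :=
  ∃ (X : Type) (_ : Fintype X) (P : X → List (Δ ⊕ X) → K) (Sol : X → List Δ → K),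
    (∀ x, (Function.support (P x)).Finite) ∧
    IsProper P ∧ IsSolution P Sol ∧ (∀ x, Sol x [] = 0) ∧
    ∃ x₀, ∀ w, S w = Sol x₀ w

end Algebraic
/-! ### Derivation trees of the underlying grammar of an algebraic system -/

mutual
  /-- Derivation trees: leaves are letters, inner nodes are labeled by a
  variable together with the right-hand side word; the children correspond to
  the symbols of that word. -/
  inductive DTree (Δ X : Type) : Type where
    | leaf : Δ → DTree Δ X
    | node : X → List (Δ ⊕ X) → DForest Δ X → DTree Δ X

  inductive DForest (Δ X : Type) : Type where
    | nil : DForest Δ X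
    | cons : DTree Δ X → DForest Δ X → DForest Δ X
end

namespace DForest

variable {Δ X : Type}

/-- The yield (frontier word) of a forest. -/
def yield : DForest Δ X → List Δ
  | .nil => []
  | .cons (.leaf a) f => a :: f.yield
  | .cons (.node _ _ f') f => f'.yield ++ f.yield
  termination_by f => sizeOf f

/-- The product of the weights `(P_Y, w)` of all inner nodes of a forest. -/
def wt {K : Type} [CommSemiring K] (P : X → List (Δ ⊕ X) → K) : DForest Δ X → K
  | .nil => 1
  | .cons (.leaf _) f => f.wt P
  | .cons (.node y w f') f => P y w * f'.wt P * f.wt P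
  termination_by f => sizeOf f

/-- The forest `f` matches the word `w : (Δ ∪ 𝒳)*`: the first components of the
labels of the trees of `f` read from left to right yield `w`, each tree being a
correct derivation tree of the grammar underlying `P`. -/
def Matches {K : Type} [Zero K] (P : X → List (Δ ⊕ X) → K) :
    DForest Δ X → List (Δ ⊕ X) → Prop
  | .nil, [] => True
  | .cons (.leaf b) f, (Sum.inl a) :: w => b = a ∧ Matches P f w
  | .cons (.node z' w' f') f, (Sum.inr z) :: w =>
      z' = z ∧ P z' w' ≠ 0 ∧ Matches P f' w' ∧ Matches P f w
  | _, _ => False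
  termination_by f _ => sizeOf f

end DForest

namespace DTree

variable {Δ X : Type}

/-- The yield of a derivation tree. -/
def yield : DTree Δ X → List Δ
  | .leaf a => [a]
  | .node _ _ f => f.yield

/-- The weight of a derivation tree: the product of `(P_Y, w)` over all inner
nodes (leaves have weight `1`). -/
def wt {K : Type} [CommSemiring K] (P : X → List (Δ ⊕ X) → K) : DTree Δ X → K
  | .leaf _ => 1
  | .node y w f => P y w * f.wt P

/-- Validity of a derivation tree w.r.t. the grammar underlying `P`. -/
def Valid {K : Type} [Zero K] (P : X → List (Δ ⊕ X) → K) : DTree Δ X → Prop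
  | .leaf _ => True
  | .node y w f => P y w ≠ 0 ∧ DForest.Matches P f w

/-- The root variable of a derivation tree. -/
def rootVar : DTree Δ X → Option X
  | .leaf _ => none
  | .node y _ _ => some y

end DTree

section Helpers

variable {K Δ X : Type} [CommSemiring K]

theorem DForest.yield_cons' (t : DTree Δ X) (g : DForest Δ X) :
    (DForest.cons t g).yield = t.yield ++ g.yield := by
  cases t <;> simp [DForest.yield, DTree.yield]

theorem DForest.wt_cons' (P : X → List (Δ ⊕ X) → K) (t : DTree Δ X) (g : DForest Δ X) :
    (DForest.cons t g).wt P = t.wt P * g.wt P := by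
  cases t <;> simp [DForest.wt, DTree.wt]

theorem matches_nil_iff (P : X → List (Δ ⊕ X) → K) (f : DForest Δ X) :
    f.Matches P [] ↔ f = .nil := by
  rcases f with _ | ⟨_ | _, _⟩ <;> simp [DForest.Matches]

theorem matches_inl_iff (P : X → List (Δ ⊕ X) → K) (f : DForest Δ X) (a : Δ)
    (u : List (Δ ⊕ X)) :
    f.Matches P (Sum.inl a :: u) ↔ ∃ g, f = .cons (.leaf a) g ∧ g.Matches P u := by
  rcases f with _ | ⟨_ | _, _⟩ <;> simp [DForest.Matches]

theorem matches_inr_iff (P : X → List (Δ ⊕ X) → K) (f : DForest Δ X) (x : X)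
    (u : List (Δ ⊕ X)) :
    f.Matches P (Sum.inr x :: u) ↔
      ∃ t g, f = .cons t g ∧ t.rootVar = some x ∧ t.Valid P ∧ g.Matches P u := by
  rcases f with _ | ⟨_ | _, _⟩ <;>
    simp [DForest.Matches, DTree.rootVar, DTree.Valid, and_assoc]

theorem length_le_of_matches (P : X → List (Δ ⊕ X) → K) (hproper : IsProper P) (n : ℕ) :
    ∀ (f : DForest Δ X) (u : List (Δ ⊕ X)), sizeOf f ≤ n → f.Matches P u →
      u.length ≤ f.yield.length := by
  induction n with
  | zero =>
    intro f u hf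
    rcases f with _ | ⟨_, _⟩ <;> simp at hf
  | succ n ih =>
    intro f u hf hm
    rcases f with _ | ⟨_ | ⟨z, w, f'⟩, g⟩ <;> rcases u with _ | ⟨_ | _, u⟩ <;>
      simp [DForest.Matches] at hm
    · simp
    · have := ih g u (by simp at hf; omega) hm.2
      simpa [DForest.yield] using this
    · have h1 := ih g u (by simp at hf; omega) hm.2.2.2
      have h2 := ih f' w (by simp at hf; omega) hm.2.2.1
      have h3 : w ≠ [] := by
        rintro rfl
        exact hm.2.1 (hproper z).1
      have := List.length_pos_iff.2 h3
      simp [DForest.yield]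
      omega

theorem wordSeries_zero (S : X → List Δ → K) (hqr : ∀ x, S x [] = 0) (u : List (Δ ⊕ X)) :
    ∀ w : List Δ, w.length < u.length → wordSeries S u w = 0 := by
  induction u with
  | nil => intro w hw; simp at hw
  | cons s u ih =>
    intro w hw
    rcases s with a | x
    · rcases w with _ | ⟨b, w⟩
      · simp [wordSeries]
      · simp only [wordSeries]
        split_ifs
        · exact ih w (by simpa using hw)
        · rfl
    · simp only [wordSeries]
      refine Finset.sum_eq_zero fun k hk => ?_
      rcases k with _ | k
      · simp [hqr]
      · rw [ih, mul_zero]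
        simp at hw hk ⊢
        omega

/-- The trees with root variable `x` and yield `w` form a finite set with total weight `S x w`. -/
def TreeOK (P : X → List (Δ ⊕ X) → K) (S : X → List Δ → K) (x : X) (w : List Δ) : Prop :=
  ∃ s : Finset (DTree Δ X),
    (∀ t, t ∈ s ↔ t.rootVar = some x ∧ t.Valid P ∧ t.yield = w) ∧ ∑ t ∈ s, t.wt P = S x w

/-- The analogue of `TreeOK` for forests. -/
def ForestOK (P : X → List (Δ ⊕ X) → K) (S : X → List Δ → K) (u : List (Δ ⊕ X))
    (w : List Δ) : Prop :=
  ∃ s : Finset (DForest Δ X),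
    (∀ f, f ∈ s ↔ f.Matches P u ∧ f.yield = w) ∧ ∑ f ∈ s, f.wt P = wordSeries S u w

theorem tree_yield_ne_nil (P : X → List (Δ ⊕ X) → K) (hproper : IsProper P)
    (t : DTree Δ X) (hv : t.Valid P) : t.yield ≠ [] := by
  rcases t with a | ⟨z, w, f⟩
  · simp [DTree.yield]
  · have h := length_le_of_matches P hproper _ f w le_rfl hv.2
    have h3 : w ≠ [] := by
      rintro rfl
      exact hv.1 (hproper z).1
    have := List.length_pos_iff.2 h3
    intro h'
    simp only [DTree.yield] at h'
    rw [h'] at h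
    simp at h
    exact h3 h

open Classical in
theorem forestOK (P : X → List (Δ ⊕ X) → K) (hproper : IsProper P)
    (S : X → List Δ → K) (hqr : ∀ x, S x [] = 0) (u : List (Δ ⊕ X)) :
    ∀ w : List Δ,
      (∀ x v, Sum.inr x ∈ u → v.length + u.length ≤ w.length + 1 → TreeOK P S x v) →
      ForestOK P S u w := by
  induction u with
  | nil =>
    intro w _
    by_cases hw : w = []
    · refine ⟨{.nil}, fun f => ?_, ?_⟩
      · simp only [Finset.mem_singleton, matches_nil_iff]
        constructor
        · rintro rfl
          simp [DForest.yield, hw]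
        · exact fun h => h.1
      · simp [DForest.wt, wordSeries, hw]
    · refine ⟨∅, fun f => ?_, ?_⟩
      · simp only [matches_nil_iff, Finset.notMem_empty, false_iff]
        rintro ⟨rfl, h⟩
        exact hw (by simpa [DForest.yield] using h.symm)
      · simp [wordSeries, hw]
  | cons s u ih =>
    intro w h
    rcases s with a | x
    · have key : (∃ w', w = a :: w') ∨ ¬ (∃ w', w = a :: w') := Classical.em _
      rcases key with ⟨w, rfl⟩ | hw
      · obtain ⟨s, hs, hsum⟩ := ih w (fun x v hx hv => h x v (by simp [hx]) (by simp; omega))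
        refine ⟨s.image (DForest.cons (.leaf a)), fun f => ?_, ?_⟩
        · simp only [Finset.mem_image, hs, matches_inl_iff]
          constructor
          · rintro ⟨g, ⟨h1, h2⟩, rfl⟩
            exact ⟨⟨g, rfl, h1⟩, by simp [DForest.yield, h2]⟩
          · rintro ⟨⟨g, rfl, h1⟩, h2⟩
            exact ⟨g, ⟨h1, by simpa [DForest.yield] using h2⟩, rfl⟩
        · rw [Finset.sum_image (by intro f _ g _ h; simpa using h)]
          simp [DForest.wt, wordSeries, hsum]
      · refine ⟨∅, fun f => ?_, ?_⟩
        · simp only [matches_inl_iff, Finset.notMem_empty, false_iff]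
          rintro ⟨⟨g, rfl, h1⟩, h2⟩
          exact hw ⟨g.yield, by rw [← h2]; simp [DForest.yield]⟩
        · rcases w with _ | ⟨b, w⟩
          · simp [wordSeries]
          · have : b ≠ a := by
              rintro rfl
              exact hw ⟨w, rfl⟩
            simp [wordSeries, this]
    · have key : ∀ k, ∃ s : Finset (DForest Δ X), k ∈ Finset.range (w.length + 1) →
          (∀ f, f ∈ s ↔ ∃ t g, f = .cons t g ∧
            (t.rootVar = some x ∧ t.Valid P ∧ t.yield = w.take k) ∧
            (g.Matches P u ∧ g.yield = w.drop k)) ∧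
          ∑ f ∈ s, f.wt P = S x (w.take k) * wordSeries S u (w.drop k) := by
        intro k
        by_cases hk : k ∈ Finset.range (w.length + 1)
        swap
        · exact ⟨∅, fun h => absurd h hk⟩
        rw [Finset.mem_range] at hk
        by_cases hk0 : k = 0
        · subst hk0
          refine ⟨∅, fun _ => ⟨fun f => ?_, by simp [hqr]⟩⟩
          simp only [Finset.notMem_empty, false_iff]
          rintro ⟨t, g, rfl, ⟨_, hv, hy⟩, _⟩
          exact tree_yield_ne_nil P hproper t hv (by simpa using hy)
        by_cases hku : w.length - k < u.length
        · refine ⟨∅, fun _ => ⟨fun f => ?_, ?_⟩⟩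
          · simp only [Finset.notMem_empty, false_iff]
            rintro ⟨t, g, rfl, _, hm, hy⟩
            have := length_le_of_matches P hproper _ g u le_rfl hm
            rw [hy, List.length_drop] at this
            omega
          · rw [wordSeries_zero S hqr u _ (by simpa using hku)]
            simp
        obtain ⟨s1, hs1, hsum1⟩ := h x (w.take k) (by simp) (by simp; omega)
        obtain ⟨s2, hs2, hsum2⟩ := ih (w.drop k) (fun x v hx hv =>
          h x v (by simp [hx]) (by simp at hv ⊢; omega))
        refine ⟨(s1 ×ˢ s2).image (fun p => DForest.cons p.1 p.2), fun _ => ⟨fun f => ?_, ?_⟩⟩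
        · simp only [Finset.mem_image, Finset.mem_product, hs1, hs2, Prod.exists]
          constructor
          · rintro ⟨t, g, ⟨h1, h2⟩, rfl⟩
            exact ⟨t, g, rfl, h1, h2⟩
          · rintro ⟨t, g, rfl, h1, h2⟩
            exact ⟨t, g, ⟨h1, h2⟩, rfl⟩
        · rw [Finset.sum_image, ← hsum1, ← hsum2, Finset.sum_mul_sum, Finset.sum_product]
          · simp only [DForest.wt_cons']
          · rintro ⟨a, b⟩ _ ⟨c, d⟩ _ h
            simpa using h
      choose s hs using key
      refine ⟨(Finset.range (w.length + 1)).biUnion s, fun f => ?_, ?_⟩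
      · rw [Finset.mem_biUnion, matches_inr_iff]
        constructor
        · rintro ⟨k, hk, hf⟩
          obtain ⟨t, g, rfl, ⟨h1, h2, h3⟩, h4, h5⟩ := ((hs k hk).1 f).1 hf
          exact ⟨⟨t, g, rfl, h1, h2, h4⟩, by rw [DForest.yield_cons', h3, h5, List.take_append_drop]⟩
        · rintro ⟨⟨t, g, rfl, h1, h2, h4⟩, h5⟩
          rw [DForest.yield_cons'] at h5
          have hk : t.yield.length ∈ Finset.range (w.length + 1) := by
            rw [← h5]; simp
          refine ⟨t.yield.length, hk, ((hs _ hk).1 _).2 ⟨t, g, rfl, ⟨h1, h2, ?_⟩, h4, ?_⟩⟩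
          · rw [← h5]; simp
          · rw [← h5]; simp
      · rw [Finset.sum_biUnion]
        · simp only [wordSeries]
          exact Finset.sum_congr rfl fun k hk => (hs k hk).2
        · intro i hi j hj hij
          refine Finset.disjoint_left.2 fun f hf hf' => hij ?_
          obtain ⟨t, g, rfl, ⟨_, _, h1⟩, _⟩ := ((hs i hi).1 f).1 hf
          obtain ⟨t', g', he, ⟨_, _, h2⟩, _⟩ := ((hs j hj).1 _).1 hf'
          simp only [DForest.cons.injEq] at he
          rw [← he.1, h1] at h2
          have := congrArg List.length h2
          simp at this hi hj
          omega

open Classical in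
theorem treeOK (P : X → List (Δ ⊕ X) → K) (hfin : ∀ x, (Function.support (P x)).Finite)
    (hproper : IsProper P)
    (S : X → List Δ → K) (hsol : IsSolution P S) (hqr : ∀ x, S x [] = 0) (n : ℕ) :
    ∀ (x : X) (w : List Δ), w.length = n → TreeOK P S x w := by
  induction n using Nat.strong_induction_on with
  | _ n ih =>
    intro x w hw
    have key : ∀ u, ∃ s : Finset (DForest Δ X), P x u ≠ 0 →
        (∀ f, f ∈ s ↔ f.Matches P u ∧ f.yield = w) ∧
          ∑ f ∈ s, f.wt P = wordSeries S u w := by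
      intro u
      by_cases hu : P x u = 0
      · exact ⟨∅, fun h => absurd hu h⟩
      have hF : ForestOK P S u w := by
        apply forestOK P hproper S hqr
        intro y v hy hv
        refine ih v.length ?_ y v rfl
        have : 2 ≤ u.length := by
          rcases u with _ | ⟨a, _ | ⟨b, u⟩⟩
          · simp at hy
          · simp at hy
            subst hy
            exact absurd ((hproper x).2 y) hu
          · simp
        omega
      obtain ⟨s, hs⟩ := hF
      exact ⟨s, fun _ => hs⟩
    choose s hs using key
    refine ⟨(hfin x).toFinset.biUnion fun u => (s u).image (DTree.node x u), fun t => ?_, ?_⟩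
    · simp only [Finset.mem_biUnion, Finset.mem_image, Set.Finite.mem_toFinset,
        Function.mem_support]
      constructor
      · rintro ⟨u, hu, f, hf, rfl⟩
        have := ((hs u hu).1 f).1 hf
        exact ⟨rfl, ⟨hu, this.1⟩, this.2⟩
      · rintro ⟨h1, h2, h3⟩
        rcases t with a | ⟨y, u, f⟩
        · simp [DTree.rootVar] at h1
        · simp only [DTree.rootVar, Option.some.injEq] at h1
          subst h1
          exact ⟨u, h2.1, f, ((hs u h2.1).1 f).2 ⟨h2.2, h3⟩, rfl⟩
    · rw [Finset.sum_biUnion, hsol x w, finsum_eq_sum_of_support_subset (s := (hfin x).toFinset)]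
      · refine Finset.sum_congr rfl fun u hu => ?_
        have hu' : P x u ≠ 0 := by simpa using hu
        rw [Finset.sum_image (by intro f _ g _ h; simpa using h), ← (hs u hu').2, Finset.mul_sum]
        simp only [DTree.wt]
      · intro u hu
        simp only [Set.Finite.coe_toFinset, Function.mem_support] at hu ⊢
        exact left_ne_zero_of_mul hu
      · intro i hi j hj hij
        refine Finset.disjoint_left.2 fun f hf hf' => hij ?_
        simp only [Finset.mem_image] at hf hf'
        obtain ⟨g, _, rfl⟩ := hf
        obtain ⟨g', _, he⟩ := hf'
        simp only [DTree.node.injEq] at he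
        exact he.2.1.symm

end Helpers

/-- **Lemma (Mathissen).** For a proper algebraic system with unique
quasiregular solution `(S_X)`, the value `(S_X, w)` equals the sum of the
weights of all derivation trees of `w` under the underlying grammar `G_X`. -/
theorem solution_eq_sum_of_derivation_tree_weights
    (K Δ X : Type) [CommSemiring K] [Fintype X]
    (P : X → List (Δ ⊕ X) → K) (hfin : ∀ x, (Function.support (P x)).Finite)
    (hproper : IsProper P)
    (Sol : X → List Δ → K) (hsol : IsSolution P Sol)
    (hqr : ∀ x, Sol x [] = 0) :
    ∀ (x : X) (w : List Δ),
      Sol x w =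
        ∑ᶠ (t : DTree Δ X)
          (_ : t.rootVar = some x ∧ t.Valid P ∧ t.yield = w), t.wt P := by
  intro x w
  obtain ⟨s, hs, hsum⟩ := treeOK P hfin hproper Sol hsol hqr _ x w rfl
  rw [← hsum, ← finsum_mem_coe_finset]
  simp only [Finset.mem_coe, hs]
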